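/- Let (C,⊗,I) be a small productive symmetric monoidal category and X, Y sequences of objects. The canonical truncation map from the set of dinatural sequences eSeq(X,Y) to the limit lim_{n∈ℕ} Stage_n(X,Y) of the chain of truncation maps π_{n+1,n} : Stage_{n+1}(X,Y) → Stage_n(X,Y) is surjective; consequently it induces a bijection between the set of observational sequences oSeq(X,Y) and lim_{n∈ℕ} Stage_n(X,Y). -/

import Mathlib

/-!
STATEMENT 17: In a small productive symmetric monoidal category, the canonical
truncation map from dinatural sequences `eSeq(X,Y)` to the limit
`lim_n Stage_n(X,Y)` of the chain of truncations is surjective; consequently it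
induces a bijection between observational sequences `oSeq(X,Y)` and the limit.
-/

open CategoryTheory MonoidalCategory

namespace Stmt17

universe v u

variable {C : Type u} [Category.{v} C] [MonoidalCategory C] [SymmetricCategory C]

/-- Sequences of objects of `C`. -/
abbrev Seq (C : Type u) [Category.{v} C] := ℕ → C

/-- An intensional sequence from `X` to `Y`. -/
structure SeqTup (X Y : Seq C) where
  M : ℕ → C
  head : (𝟙_ C ⊗ X 0 : C) ⟶ M 0 ⊗ Y 0
  step : ∀ n, (M n ⊗ X (n + 1) : C) ⟶ M (n + 1) ⊗ Y (n + 1)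

/-- The dinaturality (sliding) relation on intensional sequences. -/
def SeqRel (X Y : Seq C) : SeqTup X Y → SeqTup X Y → Prop := fun a b =>
  ∃ (M N : ℕ → C) (r : ∀ n, N n ⟶ M n)
    (f0 : (𝟙_ C ⊗ X 0 : C) ⟶ N 0 ⊗ Y 0)
    (f : ∀ n, (M n ⊗ X (n + 1) : C) ⟶ N (n + 1) ⊗ Y (n + 1)),
    a = ⟨M, f0 ≫ (r 0 ▷ Y 0), fun n => f n ≫ (r (n + 1) ▷ Y (n + 1))⟩ ∧
    b = ⟨N, f0, fun n => (r n ▷ X (n + 1)) ≫ f n⟩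

/-- Dinatural sequences: intensional sequences modulo dinaturality. -/
def eSeq (X Y : Seq C) : Type (max u v) := Quot (SeqRel X Y)

/-- A tuple representing an `n`-stage process. -/
structure StageTup (n : ℕ) (X Y : Seq C) where
  M : Fin (n + 1) → C
  head : (𝟙_ C ⊗ X 0 : C) ⟶ M 0 ⊗ Y 0
  step : ∀ i : Fin n, (M i.castSucc ⊗ X (i.1 + 1) : C) ⟶ M i.succ ⊗ Y (i.1 + 1)

/-- The dinaturality (sliding) relation on `n`-stage tuples. -/
def StageRel (n : ℕ) (X Y : Seq C) : StageTup n X Y → StageTup n X Y → Prop :=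
  fun a b =>
    ∃ (M N : Fin (n + 1) → C) (r : ∀ i, N i ⟶ M i)
      (f0 : (𝟙_ C ⊗ X 0 : C) ⟶ N 0 ⊗ Y 0)
      (f : ∀ i : Fin n, (M i.castSucc ⊗ X (i.1 + 1) : C) ⟶ N i.succ ⊗ Y (i.1 + 1)),
      a = ⟨M, f0 ≫ (r 0 ▷ Y 0), fun i => f i ≫ (r i.succ ▷ Y (i.1 + 1))⟩ ∧
      b = ⟨N, f0, fun i => (r i.castSucc ▷ X (i.1 + 1)) ≫ f i⟩

/-- `n`-stage processes: tuples modulo dinaturality. -/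
def Stage (n : ℕ) (X Y : Seq C) : Type (max u v) := Quot (StageRel n X Y)

/-- Truncation of an intensional sequence to an `n`-stage tuple. -/
def truncTup (n : ℕ) {X Y : Seq C} (T : SeqTup X Y) : StageTup n X Y where
  M := fun i => T.M i.1
  head := T.head
  step := fun i => T.step i.1

/-- Truncation of an `(n+1)`-stage tuple to an `n`-stage tuple. -/
def truncStage (n : ℕ) {X Y : Seq C} (S : StageTup (n + 1) X Y) : StageTup n X Y where
  M := fun i => S.M i.castSucc
  head := S.head
  step := fun i => S.step i.castSucc

/-- Observational equivalence of intensional sequences. -/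
def obsEq (X Y : Seq C) (f g : SeqTup X Y) : Prop :=
  ∀ n, Quot.mk (StageRel n X Y) (truncTup n f) = Quot.mk (StageRel n X Y) (truncTup n g)

/-- Observational sequences: intensional sequences modulo dinaturality and
observational equivalence. -/
def oSeq (X Y : Seq C) : Type (max u v) := Quot (obsEq X Y)

/-- The truncation map on observational sequences. -/
def oTrunc (n : ℕ) {X Y : Seq C} : oSeq X Y → Stage n X Y :=
  Quot.lift (fun T => Quot.mk (StageRel n X Y) (truncTup n T)) fun _ _ h => h n

/-! ### Productivity -/

/-- Representatives of 1-stage processes. -/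
def OneStageEl (X₀ Y₀ : C) : Type (max u v) := Σ M : C, (X₀ ⟶ M ⊗ Y₀)

/-- Dinaturality in the memory. -/
def OneStageRel (X₀ Y₀ : C) : OneStageEl X₀ Y₀ → OneStageEl X₀ Y₀ → Prop := fun a b =>
  ∃ (M N : C) (r : N ⟶ M) (f : X₀ ⟶ N ⊗ Y₀),
    a = ⟨M, f ≫ (r ▷ Y₀)⟩ ∧ b = ⟨N, f⟩

/-- 1-stage processes. -/
def OneStage (X₀ Y₀ : C) : Type (max u v) := Quot (OneStageRel X₀ Y₀)

/-- The 1-stage process of a representative. -/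
def mkOne {X₀ Y₀ : C} (M : C) (f : X₀ ⟶ M ⊗ Y₀) : OneStage X₀ Y₀ := Quot.mk _ ⟨M, f⟩

/-- `(α_i ⊗ id_A) ≫ (u ⊗ id_{Y₀})`, up to symmetry and associators. -/
def sideload {X₀ Y₀ Mi A U B : C} (αi : X₀ ⟶ Mi ⊗ Y₀) (u : (Mi ⊗ A : C) ⟶ U ⊗ B) :
    (X₀ ⊗ A : C) ⟶ U ⊗ (B ⊗ Y₀) :=
  (αi ▷ A) ≫ (α_ Mi Y₀ A).hom ≫ (Mi ◁ (β_ Y₀ A).hom) ≫ (α_ Mi A Y₀).inv ≫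
    (u ▷ Y₀) ≫ (α_ U B Y₀).hom

/-- Termination of a 1-stage process. -/
def Terminating {X₀ Y₀ : C} (a : OneStage X₀ Y₀) : Prop :=
  ∃ (M₀ : C) (α₀ : X₀ ⟶ M₀ ⊗ Y₀)
    (s : ∀ (Mi : C) (αi : X₀ ⟶ Mi ⊗ Y₀), mkOne Mi αi = a → (M₀ ⟶ Mi)),
    (∀ (Mi : C) (αi : X₀ ⟶ Mi ⊗ Y₀) (h : mkOne Mi αi = a),
      αi = α₀ ≫ (s Mi αi h ▷ Y₀)) ∧
    (∀ (Mi Mj : C) (αi : X₀ ⟶ Mi ⊗ Y₀) (αj : X₀ ⟶ Mj ⊗ Y₀)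
      (hi : mkOne Mi αi = a) (hj : mkOne Mj αj = a)
      (A U V B : C) (u : (Mi ⊗ A : C) ⟶ U ⊗ B) (v : (Mj ⊗ A : C) ⟶ V ⊗ B),
      mkOne U (sideload αi u) = mkOne V (sideload αj v) →
      mkOne U ((s Mi αi hi ▷ A) ≫ u) = mkOne V ((s Mj αj hj ▷ A) ≫ v))

/-- Productivity. -/
def Productive (C : Type u) [Category.{v} C] [MonoidalCategory C] [SymmetricCategory C] :
    Prop :=
  ∀ (X₀ Y₀ : C) (a : OneStage X₀ Y₀), Terminating a

/-!
Sliding a family of memory maps along a tuple is a special case of a *simulation*: a family of maps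
between the memories of two tuples that commutes with all their morphisms. Conversely, a simulation
`r : S ⟶ T` identifies the two stage processes, because `r` can be slid one memory at a time,
starting from the last one.

To lift a compatible family of stage processes, choose representatives `S k` and merge the first
`m + 1` stages of each into a single 1-stage process; these agree for all `k ≥ m`. Productivity,
applied at each stage in turn, factors the current morphisms of all `S k` through one common
morphism, and the cancellation clause shows that the mergings of the remaining stages still agree,
so that the construction continues. The common morphisms form an intensional sequence, and the
factoring maps are simulations from its truncations to the tuples `S k`.
-/

section Monoidal

variable {D : Type u} [Category.{v} D] [MonoidalCategory D] {X Y : Seq D} {n : ℕ}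

/-- A simulation between stage tuples: maps of memories commuting with all morphisms. These are
the morphisms of the category of `n`-stage tuples. -/
@[ext]
structure StageTup.Hom (S T : StageTup n X Y) where
  app : ∀ i, S.M i ⟶ T.M i
  head_app : S.head ≫ app 0 ▷ Y 0 = T.head
  step_app : ∀ i : Fin n,
    S.step i ≫ app i.succ ▷ Y (i.1 + 1) = app i.castSucc ▷ X (i.1 + 1) ≫ T.step i

instance : Category (StageTup n X Y) where
  Hom := StageTup.Hom
  id S := ⟨fun i => 𝟙 (S.M i), by simp, by simp⟩
  comp r s :=
    { app := fun i => r.app i ≫ s.app i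
      head_app := by rw [comp_whiskerRight, ← Category.assoc, r.head_app, s.head_app]
      step_app := fun i => by
        rw [comp_whiskerRight, ← Category.assoc, r.step_app, Category.assoc, s.step_app,
          comp_whiskerRight, Category.assoc] }

lemma StageRel.nonempty_hom {S T : StageTup n X Y} (h : StageRel n X Y S T) : Nonempty (T ⟶ S) := by
  obtain ⟨M, N, r, f₀, f, rfl, rfl⟩ := h
  exact ⟨⟨r, rfl, fun i => Category.assoc _ _ _⟩⟩

@[simp]
lemma StageTup.id_app (S : StageTup n X Y) (i : Fin (n + 1)) : Hom.app (𝟙 S) i = 𝟙 (S.M i) := rfl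

@[simp]
lemma StageTup.comp_app {S T U : StageTup n X Y} (r : S ⟶ T) (s : T ⟶ U) (i : Fin (n + 1)) :
    (r ≫ s).app i = r.app i ≫ s.app i := rfl

section Diagonal

variable {J : Type*} [Preorder J] (F : J ⥤ StageTup n X Y)

/-- The tuple whose `i`-th memory is that of `F.obj (c i)`; its steps pass from `F.obj (c i)` to
`F.obj (c (i + 1))` along the simulation between them. Varying `c` replaces one tuple by another
gradually. -/
def StageTup.diagonal (c : Fin (n + 1) → J) (hc : Monotone c) : StageTup n X Y where
  M i := (F.obj (c i)).M i
  head := (F.obj (c 0)).head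
  step i := (F.obj (c i.castSucc)).step i ≫
    (F.map (homOfLE (hc i.castSucc_le_succ))).app i.succ ▷ Y (i.1 + 1)

lemma StageTup.diagonal_const (j : J) :
    StageTup.diagonal F (fun _ => j) monotone_const = F.obj j := by
  have hstep (i : Fin n) : (F.obj j).step i ≫ (F.map (𝟙 j)).app i.succ ▷ Y (i.1 + 1) =
      (F.obj j).step i := by simp
  exact congrArg (StageTup.mk (F.obj j).M (F.obj j).head) (funext hstep)

lemma Stage.mk_diagonal_eq_of_interlaced {c d : Fin (n + 1) → J} (hc : Monotone c)
    (hd : Monotone d) (hcd : c ≤ d) (hdc : ∀ i : Fin n, d i.castSucc ≤ c i.succ) :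
    Quot.mk (StageRel n X Y) (StageTup.diagonal F c hc) =
      Quot.mk (StageRel n X Y) (StageTup.diagonal F d hd) := by
  have map_app {j k l : J} (hjk : j ≤ k) (hkl : k ≤ l) (i : Fin (n + 1)) :
      (F.map (homOfLE (hjk.trans hkl))).app i =
        (F.map (homOfLE hjk)).app i ≫ (F.map (homOfLE hkl)).app i := by
    rw [← StageTup.comp_app, ← F.map_comp, homOfLE_comp]
  refine (Quot.sound ⟨fun i => (F.obj (d i)).M i, fun i => (F.obj (c i)).M i,
    fun i => (F.map (homOfLE (hcd i))).app i, (F.obj (c 0)).head,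
    fun i => (F.obj (d i.castSucc)).step i ≫
      (F.map (homOfLE (hdc i))).app i.succ ▷ Y (i.1 + 1), ?_, ?_⟩).symm
  · refine congrArg₂ (StageTup.mk _) (StageTup.Hom.head_app _).symm (funext fun i => ?_)
    rw [map_app (hdc i) (hcd i.succ), comp_whiskerRight, Category.assoc]
  · refine congrArg (StageTup.mk _ _) (funext fun i => ?_)
    rw [map_app (hcd i.castSucc) (hdc i), comp_whiskerRight, ← Category.assoc,
      StageTup.Hom.step_app, Category.assoc]

end Diagonal

lemma Stage.mk_eq_of_hom {S T : StageTup n X Y} (r : S ⟶ T) :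
    Quot.mk (StageRel n X Y) S = Quot.mk (StageRel n X Y) T := by
  let F : ComposableArrows (StageTup n X Y) 1 := ComposableArrows.mk₁ r
  -- Stages before `j` follow `S`, the others follow `T`.
  let c (j : ℕ) (i : Fin (n + 1)) : Fin 2 := if i.1 < j then 0 else 1
  have hc (j : ℕ) : Monotone (c j) := by
    intro i i' h
    simp only [c]
    grind
  have hS : c (n + 1) = fun _ => 0 := funext fun i => if_pos i.2
  have hT : c 0 = fun _ => 1 := rfl
  have slide (j : ℕ) : Quot.mk (StageRel n X Y) (StageTup.diagonal F (c (j + 1)) (hc _)) =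
      Quot.mk (StageRel n X Y) (StageTup.diagonal F (c j) (hc _)) := by
    apply Stage.mk_diagonal_eq_of_interlaced
    · intro i
      simp only [c]
      grind
    · intro i
      simp [c]
  have slides (j : ℕ) : Quot.mk (StageRel n X Y) (StageTup.diagonal F (c j) (hc _)) =
      Quot.mk (StageRel n X Y) (StageTup.diagonal F (c 0) (hc _)) := by
    induction j with
    | zero => rfl
    | succ j ih => exact (slide j).trans ih
  have key := slides (n + 1)
  simp only [hS, hT, StageTup.diagonal_const] at key
  exact key

/-- The connecting map `π_{n+1,n} : Stage_{n+1}(X,Y) → Stage_n(X,Y)`. -/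
def Stage.trunc (n : ℕ) : Stage (n + 1) X Y → Stage n X Y :=
  Quot.map (truncStage n) fun _ _ ⟨M, N, r, f₀, f, hS, hT⟩ => by
    subst hS hT
    exact ⟨fun i => M i.castSucc, fun i => N i.castSucc, fun i => r i.castSucc, f₀,
      fun i => f i.castSucc, rfl, rfl⟩

/-- The truncation map `eSeq(X,Y) → Stage_n(X,Y)`. -/
def eSeq.trunc (n : ℕ) : eSeq X Y → Stage n X Y :=
  Quot.map (truncTup n) fun _ _ ⟨M, N, r, f₀, f, hS, hT⟩ => by
    subst hS hT
    exact ⟨fun i => M i.1, fun i => N i.1, fun i => r i.1, f₀, fun i => f i.1, rfl, rfl⟩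

lemma eSeq.trunc_trunc (n : ℕ) (e : eSeq X Y) : (e.trunc (n + 1)).trunc n = e.trunc n := by
  obtain ⟨T⟩ := e
  rfl

lemma oSeq.trunc_oTrunc (n : ℕ) (o : oSeq X Y) : (oTrunc (n + 1) o).trunc n = oTrunc n o := by
  obtain ⟨T⟩ := o
  rfl

lemma oSeq.ext_oTrunc {o o' : oSeq X Y} (h : ∀ n, oTrunc n o = oTrunc n o') : o = o' := by
  obtain ⟨T⟩ := o
  obtain ⟨T'⟩ := o'
  exact Quot.sound h

namespace OneStage

variable {Z Z' Z'' B : D}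

/-- Precomposition of a 1-stage process with a morphism: the functoriality of `OneStage` in its
input. -/
def precomp (p : Z' ⟶ Z) : OneStage Z B → OneStage Z' B :=
  Quot.map (fun x => ⟨x.1, p ≫ x.2⟩) fun _ _ ⟨M, N, r, f, hx, hy⟩ => by
    subst hx hy
    exact ⟨M, N, r, p ≫ f, congrArg (Sigma.mk M) (Category.assoc _ _ _).symm, rfl⟩

lemma precomp_precomp (p : Z' ⟶ Z) (q : Z'' ⟶ Z') (x : OneStage Z B) :
    precomp q (precomp p x) = precomp (q ≫ p) x := by
  obtain ⟨M, f⟩ := x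
  exact congrArg (mkOne M) (Category.assoc q p f).symm

lemma precomp_id (x : OneStage Z B) : precomp (𝟙 Z) x = x := by
  obtain ⟨M, f⟩ := x
  exact congrArg (mkOne M) (Category.id_comp f)

lemma precomp_injective (e : Z' ≅ Z) :
    Function.Injective (precomp e.hom : OneStage Z B → OneStage Z' B) :=
  Function.LeftInverse.injective (g := precomp e.inv) fun x => by
    rw [precomp_precomp, e.inv_hom_id, precomp_id]

lemma mkOne_comp_whiskerRight {M N : D} (f : Z ⟶ N ⊗ B) (r : N ⟶ M) :
    mkOne M (f ≫ r ▷ B) = mkOne N f :=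
  Quot.sound ⟨M, N, r, f, rfl, rfl⟩

end OneStage

end Monoidal

section Sideload

variable {Z Z' B₀ M N A U V B : C}

lemma sideload_comp_whiskerRight (g : Z ⟶ M ⊗ B₀) (u : (M ⊗ A : C) ⟶ U ⊗ B) (r : U ⟶ V) :
    sideload g (u ≫ r ▷ B) = sideload g u ≫ r ▷ (B ⊗ B₀) := by
  simp [sideload]

lemma comp_whiskerRight_sideload (g : Z ⟶ N ⊗ B₀) (r : N ⟶ M) (u : (M ⊗ A : C) ⟶ U ⊗ B) :
    sideload (g ≫ r ▷ B₀) u = sideload g (r ▷ A ≫ u) := by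
  simp only [sideload, comp_whiskerRight, Category.assoc, associator_naturality_left_assoc,
    ← whisker_exchange_assoc, associator_inv_naturality_left_assoc]

lemma comp_sideload (p : Z' ⟶ Z) (g : Z ⟶ M ⊗ B₀) (u : (M ⊗ A : C) ⟶ U ⊗ B) :
    sideload (p ≫ g) u = p ▷ A ≫ sideload g u := by
  simp [sideload]

namespace OneStage

/-- The 1-stage process that performs `g` and then, on its memory, the process `x`: this is
`sideload` with continuations taken up to dinaturality. -/
def after (g : Z ⟶ M ⊗ B₀) : OneStage (M ⊗ A) B → OneStage (Z ⊗ A) (B ⊗ B₀) :=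
  Quot.map (fun x => ⟨x.1, sideload g x.2⟩) fun _ _ ⟨V, U, r, u, hx, hy⟩ => by
    subst hx hy
    exact ⟨V, U, r, sideload g u, congrArg (Sigma.mk V) (sideload_comp_whiskerRight g u r), rfl⟩

lemma comp_whiskerRight_after (g : Z ⟶ N ⊗ B₀) (r : N ⟶ M) (x : OneStage (M ⊗ A) B) :
    after (g ≫ r ▷ B₀) x = after g (precomp (r ▷ A) x) := by
  obtain ⟨U, u⟩ := x
  exact congrArg (mkOne U) (comp_whiskerRight_sideload g r u)

lemma comp_after (p : Z' ⟶ Z) (g : Z ⟶ M ⊗ B₀) (x : OneStage (M ⊗ A) B) :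
    after (p ≫ g) x = precomp (p ▷ A) (after g x) := by
  obtain ⟨U, u⟩ := x
  exact congrArg (mkOne U) (comp_sideload p g u)

lemma precomp_associator_inv_after_whiskerRight_comp {P Q : C} (p : Q ⟶ P)
    (g : (P ⊗ Z : C) ⟶ M ⊗ B₀) (x : OneStage (M ⊗ A) B) :
    precomp (α_ Q Z A).inv (after (p ▷ Z ≫ g) x) =
      precomp (p ▷ (Z ⊗ A)) (precomp (α_ P Z A).inv (after g x)) := by
  rw [comp_after, precomp_precomp, precomp_precomp, associator_inv_naturality_left]

end OneStage

lemma Terminating.exists_factorization {a : OneStage Z B₀} (ha : Terminating a) {ι : Type*}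
    {M : ι → C} (f : ∀ i, Z ⟶ M i ⊗ B₀) (hf : ∀ i, mkOne (M i) (f i) = a) :
    ∃ (M₀ : C) (α : Z ⟶ M₀ ⊗ B₀) (s : ∀ i, M₀ ⟶ M i), (∀ i, α ≫ s i ▷ B₀ = f i) ∧
      ∀ (i j : ι) (A B : C) (x : OneStage (M i ⊗ A) B) (y : OneStage (M j ⊗ A) B),
        OneStage.after (f i) x = OneStage.after (f j) y →
          OneStage.precomp (s i ▷ A) x = OneStage.precomp (s j ▷ A) y := by
  obtain ⟨M₀, α, s, hs, hcancel⟩ := ha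
  refine ⟨M₀, α, fun i => s _ _ (hf i), fun i => (hs _ _ (hf i)).symm, ?_⟩
  rintro i j A B ⟨U, u⟩ ⟨V, v⟩ h
  exact hcancel _ _ _ _ (hf i) (hf j) A U V B u v h

end Sideload

section Merging

/-- `X n ⊗ (X (n + 1) ⊗ ⋯ ⊗ X (n + m))`, the input of the merging of stages `n, …, n + m`. -/
def inputs (X : Seq C) : ℕ → ℕ → C
  | 0, n => X n
  | m + 1, n => X n ⊗ inputs X m (n + 1)

/-- `(Y (n + m) ⊗ ⋯ ⊗ Y (n + 1)) ⊗ Y n`, the output of the merging of stages `n, …, n + m`. The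
order is reversed because `sideload` puts the later output first. -/
def outputs (Y : Seq C) : ℕ → ℕ → C
  | 0, n => Y n
  | m + 1, n => outputs Y m (n + 1) ⊗ Y n

variable {X Y : Seq C} {k : ℕ}

namespace StageTup

/-- The 1-stage process merging the stages `n, …, n + m` of `S`, with `g` in place of its `n`-th
morphism. Leaving `g` free lets the stages be cut off one at a time. -/
def run (S : StageTup k X Y) : ∀ (m n : ℕ) (h : n + m ≤ k) {P : C}
    (_ : (P ⊗ X n : C) ⟶ S.M ⟨n, by omega⟩ ⊗ Y n), OneStage (P ⊗ inputs X m n) (outputs Y m n)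
  | 0, _, _, _, g => mkOne _ g
  | m + 1, n, h, P, g =>
    OneStage.precomp (α_ P (X n) (inputs X m (n + 1))).inv
      (OneStage.after g (run S m (n + 1) (by omega) (S.step ⟨n, by omega⟩)))

lemma run_whiskerRight_comp (S : StageTup k X Y) {m n : ℕ} (h : n + m ≤ k) {P Q : C} (p : Q ⟶ P)
    (g : (P ⊗ X n : C) ⟶ S.M ⟨n, by omega⟩ ⊗ Y n) :
    S.run m n h (p ▷ X n ≫ g) = OneStage.precomp (p ▷ inputs X m n) (S.run m n h g) := by
  cases m with
  | zero => rfl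
  | succ m => exact OneStage.precomp_associator_inv_after_whiskerRight_comp _ _ _

lemma run_comp_app {S T : StageTup k X Y} (r : S ⟶ T) {m n : ℕ} (h : n + m ≤ k) {P : C}
    (g : (P ⊗ X n : C) ⟶ S.M ⟨n, by omega⟩ ⊗ Y n) :
    T.run m n h (g ≫ r.app ⟨n, by omega⟩ ▷ Y n) = S.run m n h g := by
  induction m generalizing n P with
  | zero => exact OneStage.mkOne_comp_whiskerRight _ _
  | succ m ih =>
    have hstep : S.step ⟨n, by omega⟩ ≫ r.app ⟨n + 1, by omega⟩ ▷ Y (n + 1) =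
        r.app ⟨n, by omega⟩ ▷ X (n + 1) ≫ T.step ⟨n, by omega⟩ := r.step_app ⟨n, by omega⟩
    simp only [run, OneStage.comp_whiskerRight_after]
    rw [← run_whiskerRight_comp, ← hstep, ih]

lemma run_truncStage (S : StageTup (k + 1) X Y) {m n : ℕ} (h : n + m ≤ k) {P : C}
    (g : (P ⊗ X n : C) ⟶ S.M ⟨n, by omega⟩ ⊗ Y n) :
    (truncStage k S).run m n h g = S.run m n (by omega) g := by
  induction m generalizing n P with
  | zero => rfl
  | succ m ih =>
    simp only [run]
    congr 2
    exact ih (by omega) _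

end StageTup

namespace Stage

/-- The 1-stage process merging the stages `0, …, m` of a `k`-stage process. -/
def merge (m : ℕ) (h : m ≤ k) : Stage k X Y → OneStage (𝟙_ C ⊗ inputs X m 0) (outputs Y m 0) :=
  Quot.lift (fun S => S.run m 0 (by omega) S.head) fun S T hST => by
    obtain ⟨r⟩ := hST.nonempty_hom
    exact (congrArg (S.run m 0 (by omega)) r.head_app.symm).trans
      (StageTup.run_comp_app r (by omega) T.head)

lemma merge_trunc (x : Stage (k + 1) X Y) {m : ℕ} (h : m ≤ k) :
    (x.trunc k).merge m h = x.merge m (by omega) := by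
  obtain ⟨S⟩ := x
  exact S.run_truncStage (by omega) S.head

lemma merge_eq_merge_of_trunc_eq {x : ∀ n, Stage n X Y} (hx : ∀ n, (x (n + 1)).trunc n = x n)
    {m k : ℕ} (h : m ≤ k) : (x k).merge m h = (x m).merge m le_rfl := by
  induction k, h using Nat.le_induction with
  | base => rfl
  | succ k h ih => rw [← merge_trunc (x (k + 1)) h, hx, ih]

end Stage

end Merging

section Lifting

variable {X Y : Seq C} {S : ∀ k, StageTup k X Y} {n : ℕ}

/-- Morphisms from a common memory into the `n`-th memories of the tuples `S k`, `n ≤ k`, that are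
indistinguishable by the stages following them: the state of the construction of a sequence with
truncations `S k` after `n` stages. -/
structure CoherentStep (S : ∀ k, StageTup k X Y) (n : ℕ) where
  dom : C
  hom : ∀ k (h : n ≤ k), (dom ⊗ X n : C) ⟶ (S k).M ⟨n, by omega⟩ ⊗ Y n
  run_eq : ∀ (m k l : ℕ) (hk : n + m ≤ k) (hl : n + m ≤ l),
    (S k).run m n hk (hom k (by omega)) = (S l).run m n hl (hom l (by omega))

/-- The heads of representatives of a compatible family of stage processes, from which the
construction of a sequence starts. -/
def CoherentStep.ofHeads (hS : ∀ n, Stage.trunc n (Quot.mk (StageRel (n + 1) X Y) (S (n + 1))) =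
      Quot.mk (StageRel n X Y) (S n)) : CoherentStep S 0 where
  dom := 𝟙_ C
  hom k _ := (S k).head
  run_eq m k l hk hl := by
    have hmerge {j : ℕ} (hj : 0 + m ≤ j) : (S j).run m 0 hj (S j).head =
        Stage.merge m le_rfl (Quot.mk _ (S m)) :=
      Stage.merge_eq_merge_of_trunc_eq (x := fun n => Quot.mk _ (S n)) hS (by omega : m ≤ j)
    exact (hmerge hk).trans (hmerge hl).symm

lemma CoherentStep.exists_next (hC : Productive C) (F : CoherentStep S n) :
    ∃ (G : CoherentStep S (n + 1)) (f : (F.dom ⊗ X n : C) ⟶ G.dom ⊗ Y n)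
      (s : ∀ k (h : n ≤ k), G.dom ⟶ (S k).M ⟨n, by omega⟩),
      (∀ k h, f ≫ s k h ▷ Y n = F.hom k h) ∧
      ∀ k (h : n < k), G.hom k h = s k h.le ▷ X (n + 1) ≫ (S k).step ⟨n, h⟩ := by
  obtain ⟨M₀, f, s, hs, hcancel⟩ :=
    (hC _ _ (mkOne _ (F.hom n le_rfl))).exists_factorization
      (fun k : {k // n ≤ k} => F.hom k.1 k.2) fun k => F.run_eq 0 k n k.2 le_rfl
  refine ⟨⟨M₀, fun k hk => s ⟨k, by omega⟩ ▷ X (n + 1) ≫ (S k).step ⟨n, hk⟩, ?_⟩,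
    f, fun k hk => s ⟨k, hk⟩, fun k hk => hs ⟨k, hk⟩, fun _ _ => rfl⟩
  intro m k l hk hl
  rw [StageTup.run_whiskerRight_comp, StageTup.run_whiskerRight_comp]
  apply hcancel
  exact OneStage.precomp_injective (α_ F.dom (X n) (inputs X m (n + 1))).symm
    (F.run_eq (m + 1) k l (by omega) (by omega))

lemma Productive.exists_truncTup_eq (hC : Productive C) (x : ∀ n, Stage n X Y)
    (hx : ∀ n, (x (n + 1)).trunc n = x n) :
    ∃ T : SeqTup X Y, ∀ n, Quot.mk (StageRel n X Y) (truncTup n T) = x n := by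
  choose S hS using fun k => Quot.exists_rep (x k)
  obtain rfl : (fun k => Quot.mk _ (S k)) = x := funext hS
  choose next f s hs hnext using fun (n : ℕ) (F : CoherentStep S n) => F.exists_next hC
  let F : ∀ n, CoherentStep S n := Nat.rec (CoherentStep.ofHeads hx) next
  let T : SeqTup X Y := ⟨fun n => (F (n + 1)).dom, f 0 (F 0), fun n => f (n + 1) (F (n + 1))⟩
  refine ⟨T, fun n => Stage.mk_eq_of_hom ⟨fun i => s i.1 (F i.1) n (by omega), ?_, fun i => ?_⟩⟩
  · exact hs 0 (F 0) n n.zero_le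
  · exact (hs (i.1 + 1) (F (i.1 + 1)) n i.2).trans (hnext i.1 (F i.1) n i.2)

end Lifting

/-- **Observational sequences are the limit of the `n`-stage truncations.**
In a productive category, truncation descends to dinatural sequences and to the
connecting maps `π_{n+1,n} : Stage_{n+1} → Stage_n`; the canonical map from
`eSeq(X,Y)` to the limit `lim_n Stage_n(X,Y)` is surjective; and the induced map from
`oSeq(X,Y)` to the limit is a bijection. -/
theorem eSeq_to_limit_surjective (hC : Productive C) (X Y : Seq C) :
    ∃ (tr : ∀ n, eSeq X Y → Stage n X Y)
      (π : ∀ n, Stage (n + 1) X Y → Stage n X Y),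
      -- `tr` is the truncation of dinatural sequences
      (∀ (n : ℕ) (T : SeqTup X Y),
        tr n (Quot.mk (SeqRel X Y) T) = Quot.mk (StageRel n X Y) (truncTup n T)) ∧
      -- `π` is the truncation of stage tuples
      (∀ (n : ℕ) (S : StageTup (n + 1) X Y),
        π n (Quot.mk (StageRel (n + 1) X Y) S) =
          Quot.mk (StageRel n X Y) (truncStage n S)) ∧
      -- the truncations of a dinatural sequence are compatible
      (∃ hcomp : ∀ (e : eSeq X Y) (n : ℕ), π n (tr (n + 1) e) = tr n e,
        -- the canonical map `eSeq(X,Y) → lim_n Stage_n(X,Y)` is surjective …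
        Function.Surjective
          (fun e => (⟨fun n => tr n e, hcomp e⟩ :
            { s : ∀ n, Stage n X Y // ∀ n, π n (s (n + 1)) = s n }))) ∧
      -- … and the truncations of observational sequences are compatible and induce a
      -- bijection `oSeq(X,Y) ≅ lim_n Stage_n(X,Y)`
      (∃ hcompO : ∀ (o : oSeq X Y) (n : ℕ), π n (oTrunc (n + 1) o) = oTrunc n o,
        Function.Bijective
          (fun o => (⟨fun n => oTrunc n o, hcompO o⟩ :
            { s : ∀ n, Stage n X Y // ∀ n, π n (s (n + 1)) = s n }))) := by
  refine ⟨eSeq.trunc, Stage.trunc, fun _ _ => rfl, fun _ _ => rfl,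
    ⟨fun e n => e.trunc_trunc n, ?_⟩, fun o n => oSeq.trunc_oTrunc n o, ?_, ?_⟩
  · rintro ⟨x, hx⟩
    obtain ⟨T, hT⟩ := hC.exists_truncTup_eq x hx
    exact ⟨Quot.mk _ T, Subtype.ext (funext hT)⟩
  · exact fun o o' h => oSeq.ext_oTrunc fun n => congrFun (congrArg Subtype.val h) n
  · rintro ⟨x, hx⟩
    obtain ⟨T, hT⟩ := hC.exists_truncTup_eq x hx
    exact ⟨Quot.mk _ T, Subtype.ext (funext hT)⟩

end Stmt17
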